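/- Let α, β ∈ (1,2), N_x, N_y ≥ 1, η_α, η_β > 0, and N = N_x·N_y. Then P_α = Q_α·τ(Â_α) (size N_x) and P_β = Q_β·τ(Â_β) (size N_y) are symmetric positive definite, and the τ-matrix based preconditioner P_τ = I_N + η_α (I_{N_y} ⊗ P_α) + η_β (P_β ⊗ I_{N_x}) is symmetric positive definite; in particular P_τ is invertible. -/

import Mathlib

open Matrix Kronecker

/-- The second-order coefficients `g_k^{(γ)}`. -/
noncomputable def gCoef (γ : ℝ) (k : ℤ) : ℝ :=
  (-1 : ℝ) ^ k * Real.Gamma (γ + 1) /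
    (Real.Gamma (γ / 2 - k + 1) * Real.Gamma (γ / 2 + k + 1))

/-- `Â_γ`: the symmetric Toeplitz matrix with `(i,j)` entry `g_{i-j}^{(γ)}`. -/
noncomputable def Ahat (γ : ℝ) (N : ℕ) : Matrix (Fin N) (Fin N) ℝ :=
  fun i j => gCoef γ ((i : ℤ) - (j : ℤ))

/-- τ part of the symmetric Toeplitz matrix with first column `t 0, …, t (N-1)`:
with 1-based indices `i, j ∈ {1,…,N}` (here `i.val + 1`, `j.val + 1`) and the
convention `t m = 0` for `m ≥ N`, the `(i,j)` entry is
`t |i-j| - t (i+j) - t (2(N+1)-i-j)`. -/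
noncomputable def tauOf (N : ℕ) (t : ℕ → ℝ) : Matrix (Fin N) (Fin N) ℝ :=
  fun i j =>
    (fun m => if m < N then t m else 0) ((i : ℤ) - (j : ℤ)).natAbs -
    (fun m => if m < N then t m else 0) (((i : ℕ) + 1) + ((j : ℕ) + 1)) -
    (fun m => if m < N then t m else 0) (2 * (N + 1) - ((i : ℕ) + 1) - ((j : ℕ) + 1))

/-- `τ(Â_γ)`. -/
noncomputable def tauAhat (γ : ℝ) (N : ℕ) : Matrix (Fin N) (Fin N) ℝ :=
  tauOf N (fun m => gCoef γ (m : ℤ))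

/-- The tridiagonal matrix with `2` on the diagonal and `-1` on the sub/superdiagonals. -/
def triDiag (N : ℕ) : Matrix (Fin N) (Fin N) ℝ :=
  fun i j =>
    if (i : ℤ) = (j : ℤ) then 2
    else if ((i : ℤ) - (j : ℤ)).natAbs = 1 then -1 else 0

/-- `Q_γ = I_N + (γ/24)·T_N`. -/
noncomputable def Qmat (γ : ℝ) (N : ℕ) : Matrix (Fin N) (Fin N) ℝ :=
  1 + (γ / 24) • triDiag N

/-- `P_γ = Q_γ · τ(Â_γ)`. -/
noncomputable def Pmat (γ : ℝ) (N : ℕ) : Matrix (Fin N) (Fin N) ℝ :=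
  Qmat γ N * tauAhat γ N

/-!
With `c` the even extension of the first column `t`, cut off at `n`, the `(i, j)` entry of `τ(T)` is
`c (i - j) - c (i + j + 2) - c (i + j - 2 * n)` in 0-based indices. On `ℤ × ℤ` this kernel satisfies
the discrete wave equation, and it vanishes at the ghost indices `-1` and `n`, so the tridiagonal
matrix acts on it by a second difference and therefore commutes with `τ(T)`. Thus `Q_γ` and
`τ(Â_γ)` commute, and their product is positive definite as soon as both factors are.

`Q_γ` is the identity plus a nonnegative multiple of a Gram matrix. For `τ(Â_γ)`, the three terms of
the kernel sample `c` at pairwise distinct points along a row, so by Gershgorin the eigenvalues of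
`τ(Â_γ) - g_0` are at most `2 ∑ |g_m|` (`1 ≤ m < n`) in absolute value. This is less than `g_0`,
because `g_m < 0` for `m ≥ 1` and `γ (g_0 + 2 ∑ g_m) = -(γ + 2 n) g_n`.
-/

section PositiveDefinite

open ComplexOrder

lemma posDef_one_add_kronecker_sum {ι κ 𝕜 : Type*} [Finite ι] [Finite κ] [DecidableEq ι]
    [DecidableEq κ] [RCLike 𝕜] {A : Matrix ι ι 𝕜} {B : Matrix κ κ 𝕜} (hA : A.PosSemidef)
    (hB : B.PosSemidef) {a b : ℝ} (ha : 0 ≤ a) (hb : 0 ≤ b) :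
    (1 + a • ((1 : Matrix κ κ 𝕜) ⊗ₖ A) + b • (B ⊗ₖ (1 : Matrix ι ι 𝕜))).PosDef :=
  (PosDef.one.add_posSemidef ((PosSemidef.one.kronecker hA).smul ha)).add_posSemidef
    ((hB.kronecker PosSemidef.one).smul hb)

variable {ι 𝕜 : Type*} [Fintype ι] [RCLike 𝕜]

open MatrixOrder in
lemma posDef_mul_of_commute {A B : Matrix ι ι 𝕜} (hA : A.PosDef) (hB : B.PosDef)
    (hAB : Commute A B) : (A * B).PosDef := by
  classical
  exact ((hA.isStrictlyPositive.commute_iff hB.isStrictlyPositive).mp hAB).posDef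

variable [DecidableEq ι]

lemma exists_norm_le_sum_norm_of_mem_spectrum {K : Type*} [NormedField K] {A : Matrix ι ι K}
    {μ : K} (hμ : μ ∈ spectrum K A) : ∃ i, ‖μ‖ ≤ ∑ j, ‖A i j‖ := by
  rw [← Matrix.spectrum_toLin', ← Module.End.hasEigenvalue_iff_mem_spectrum] at hμ
  obtain ⟨i, hi⟩ := eigenvalue_mem_ball hμ
  rw [mem_closedBall_iff_norm] at hi
  refine ⟨i, ?_⟩
  rw [← Finset.add_sum_erase _ _ (Finset.mem_univ i)]
  linarith [norm_le_norm_add_norm_sub' μ (A i i)]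

lemma posDef_smul_one_add_of_sum_norm_lt {A : Matrix ι ι 𝕜} (hA : A.IsHermitian) {a : ℝ}
    (ha : ∀ i, ∑ j, ‖A i j‖ < a) : (a • (1 : Matrix ι ι 𝕜) + A).PosDef := by
  have hH : (a • (1 : Matrix ι ι 𝕜) + A).IsHermitian :=
    (isHermitian_one.smul (IsSelfAdjoint.all a)).add hA
  refine hH.posDef_iff_eigenvalues_pos.mpr fun i => ?_
  have hμ : hH.eigenvalues i - a ∈ spectrum ℝ A := by
    rw [← spectrum.add_mem_add_iff (s := a), sub_add_cancel, Algebra.algebraMap_eq_smul_one]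
    exact hH.eigenvalues_mem_spectrum_real i
  obtain ⟨k, hk⟩ :=
    exists_norm_le_sum_norm_of_mem_spectrum ((spectrum.algebraMap_mem_iff 𝕜).mpr hμ)
  rw [norm_algebraMap', Real.norm_eq_abs] at hk
  linarith [neg_lt_of_abs_lt (hk.trans_lt (ha k))]

end PositiveDefinite

section Coefficients

-- At `s = 0` this relies on `Real.Gamma 0 = 0`, which matches the zero of `1 / Γ` there.
lemma inv_Gamma_eq_mul_inv_Gamma_add_one (s : ℝ) :
    (Real.Gamma s)⁻¹ = s * (Real.Gamma (s + 1))⁻¹ := by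
  rcases eq_or_ne s 0 with rfl | hs
  · simp
  · rw [Real.Gamma_add_one hs, mul_inv, mul_inv_cancel_left₀ hs]

lemma gCoef_add_one_mul (γ : ℝ) (k : ℤ) :
    gCoef γ (k + 1) * (k + 1 + γ / 2) = gCoef γ k * (k - γ / 2) := by
  have hpred := inv_Gamma_eq_mul_inv_Gamma_add_one (γ / 2 - k)
  have hsucc := inv_Gamma_eq_mul_inv_Gamma_add_one (γ / 2 + k + 1)
  simp only [gCoef, div_eq_mul_inv, mul_inv, zpow_add_one₀ (neg_ne_zero.mpr (one_ne_zero' ℝ))]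
    at hpred hsucc ⊢
  push_cast
  rw [show γ * 2⁻¹ - (k + 1 : ℝ) + 1 = γ * 2⁻¹ - k by ring,
    ← add_assoc (γ * 2⁻¹) (k : ℝ) 1, hpred, hsucc]
  ring

lemma mul_gCoef_zero_add_sum (γ : ℝ) {n : ℕ} (hn : 1 ≤ n) :
    γ * (gCoef γ 0 + 2 * ∑ m ∈ Finset.Ico 1 n, gCoef γ m) = -(γ + 2 * n) * gCoef γ n := by
  induction n, hn using Nat.le_induction with
  | base =>
    have hrec := gCoef_add_one_mul γ 0
    simp only [zero_add, Int.cast_zero, Finset.Ico_self, Finset.sum_empty, Nat.cast_one] at hrec ⊢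
    linarith
  | succ n hn ih =>
    have hrec := gCoef_add_one_mul γ n
    rw [Finset.sum_Ico_succ_top hn]
    push_cast at hrec ⊢
    linarith

variable {γ : ℝ}

lemma gCoef_zero_pos (hγ : -1 < γ) : 0 < gCoef γ 0 := by
  have hnum := Real.Gamma_pos_of_pos (show 0 < γ + 1 by linarith)
  have hden := Real.Gamma_pos_of_pos (show 0 < γ / 2 + 1 by linarith)
  simp only [gCoef, zpow_zero, Int.cast_zero, sub_zero, add_zero]
  positivity

lemma gCoef_lt_zero (hγ : γ ∈ Set.Ioo (0 : ℝ) 2) {m : ℕ} (hm : 1 ≤ m) : gCoef γ m < 0 := by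
  obtain ⟨hγ₀, hγ₂⟩ := hγ
  induction m, hm using Nat.le_induction with
  | base =>
    have hrec := gCoef_add_one_mul γ 0
    have hzero := gCoef_zero_pos (show -1 < γ by linarith)
    simp only [zero_add, Int.cast_zero, Nat.cast_one] at hrec ⊢
    refine neg_of_mul_neg_left (b := 1 + γ / 2) ?_ (by positivity)
    nlinarith
  | succ m hm ih =>
    have hrec := gCoef_add_one_mul γ m
    have hm' : (1 : ℝ) ≤ m := by exact_mod_cast hm
    push_cast at hrec ⊢
    refine neg_of_mul_neg_left (b := m + 1 + γ / 2) ?_ (by positivity)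
    rw [hrec]
    exact mul_neg_of_neg_of_pos ih (by linarith)

lemma two_mul_sum_abs_gCoef_lt (hγ : γ ∈ Set.Ioo (0 : ℝ) 2) (n : ℕ) :
    2 * ∑ m ∈ Finset.Ico 1 n, |gCoef γ m| < gCoef γ 0 := by
  rcases n.eq_zero_or_pos with rfl | hn
  · simpa using gCoef_zero_pos (by linarith [hγ.1])
  have habs : ∑ m ∈ Finset.Ico 1 n, |gCoef γ m| = -∑ m ∈ Finset.Ico 1 n, gCoef γ m := by
    rw [← Finset.sum_neg_distrib]
    exact Finset.sum_congr rfl fun m hm => abs_of_neg (gCoef_lt_zero hγ (Finset.mem_Ico.mp hm).1)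
  have hpos : 0 < γ * (gCoef γ 0 + 2 * ∑ m ∈ Finset.Ico 1 n, gCoef γ m) := by
    rw [mul_gCoef_zero_add_sum γ hn]
    exact mul_pos_of_neg_of_neg (by linarith [hγ.1, n.cast_nonneg (α := ℝ)]) (gCoef_lt_zero hγ hn)
  linarith [pos_of_mul_pos_right hpos hγ.1.le]

end Coefficients

section Tridiagonal

variable {n : ℕ}

/-- The matrix of the map sending `x : Fin n → ℝ`, extended by zero at both ends, to its `n + 1`
successive differences; it factors `triDiag` as a Gram matrix. -/
def diffMatrix (n : ℕ) : Matrix (Fin n) (Fin (n + 1)) ℝ :=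
  fun i => Pi.single i.castSucc 1 - Pi.single i.succ 1

lemma triDiag_eq_diffMatrix_mul_conjTranspose :
    triDiag n = diffMatrix n * (diffMatrix n)ᴴ := by
  ext i j
  simp only [mul_apply', conjTranspose_eq_transpose_of_trivial, diffMatrix, triDiag,
    transpose_apply, sub_dotProduct, single_one_dotProduct, Pi.sub_apply, Pi.single_apply,
    Fin.ext_iff, Fin.val_castSucc, Fin.val_succ]
  split_ifs <;> first | omega | norm_num

lemma posSemidef_triDiag : (triDiag n).PosSemidef :=
  triDiag_eq_diffMatrix_mul_conjTranspose ▸ posSemidef_self_mul_conjTranspose _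

lemma posDef_Qmat {γ : ℝ} (hγ : 0 ≤ γ) : (Qmat γ n).PosDef :=
  PosDef.one.add_posSemidef (posSemidef_triDiag.smul (by positivity))

lemma sum_ite_val_eq {M : Type*} [AddCommMonoid M] {v : ℤ → M} (hv₀ : v (-1) = 0)
    (hvn : v n = 0) {m : ℤ} (hm : -1 ≤ m) (hmn : m ≤ n) :
    ∑ l : Fin n, (if (l : ℤ) = m then v l else 0) = v m := by
  by_cases h : 0 ≤ m ∧ m < n
  · rw [Finset.sum_eq_single_of_mem (⟨m.toNat, by omega⟩ : Fin n) (Finset.mem_univ _)]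
    · simp [h.1]
    · intro l _ hl
      exact if_neg fun hlm => hl (Fin.ext (by simp [← hlm]))
  · rw [Finset.sum_eq_zero fun l _ => if_neg (by omega)]
    obtain rfl | rfl : m = -1 ∨ m = n := by omega
    exacts [hv₀.symm, hvn.symm]

lemma triDiag_mulVec_apply {v : ℤ → ℝ} (hv₀ : v (-1) = 0) (hvn : v n = 0) (i : Fin n) :
    (triDiag n *ᵥ fun l => v l) i = 2 * v i - v (i - 1) - v (i + 1) := by
  have hrow (l : Fin n) : triDiag n i l * v l = 2 * (if (l : ℤ) = i then v l else 0)
      - (if (l : ℤ) = i - 1 then v l else 0) - (if (l : ℤ) = i + 1 then v l else 0) := by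
    unfold triDiag
    split_ifs <;> first | omega | ring
  simp only [mulVec, dotProduct, hrow, Finset.sum_sub_distrib, ← Finset.mul_sum]
  rw [sum_ite_val_eq hv₀ hvn (by omega) (by omega), sum_ite_val_eq hv₀ hvn (by omega) (by omega),
    sum_ite_val_eq hv₀ hvn (by omega) (by omega)]

end Tridiagonal

section Tau

lemma sum_comp_le_sum_of_injective {ι κ : Type*} [Fintype ι] {φ : ι → κ}
    (hφ : Function.Injective φ) {f : κ → ℝ} (hf : ∀ k, 0 ≤ f k) {s : Finset κ}
    (hs : ∀ k ∉ s, f k = 0) : ∑ i, f (φ i) ≤ ∑ k ∈ s, f k :=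
  calc ∑ i, f (φ i)
    _ = ∑' i, f (φ i) := (tsum_fintype _).symm
    _ ≤ ∑' k, f k := tsum_comp_le_tsum_of_inj (summable_of_ne_finset_zero hs) hf hφ
    _ = ∑ k ∈ s, f k := tsum_eq_sum hs

variable {n : ℕ} {t : ℕ → ℝ}

/-- The sequence `m ↦ t |m|` on `ℤ`, set to zero for `|m| ≥ n`: the symbol of the `n × n`
symmetric Toeplitz matrix with first column `t`. -/
noncomputable def evenCutoff (n : ℕ) (t : ℕ → ℝ) (m : ℤ) : ℝ :=
  if m.natAbs < n then t m.natAbs else 0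

/-- The entries of `tauOf n t`, with 0-based indices allowed to range over `ℤ`. -/
noncomputable def tauKernel (n : ℕ) (t : ℕ → ℝ) (x y : ℤ) : ℝ :=
  evenCutoff n t (x - y) - evenCutoff n t (x + y + 2) - evenCutoff n t (x + y - 2 * n)

lemma even_evenCutoff : Function.Even (evenCutoff n t) := fun m => by
  simp [evenCutoff]

lemma evenCutoff_of_le {m : ℤ} (hm : n ≤ m.natAbs) : evenCutoff n t m = 0 :=
  if_neg hm.not_gt

lemma tauOf_apply (i j : Fin n) : tauOf n t i j = tauKernel n t i j := by
  have hsum : ((i : ℤ) + j + 2).natAbs = ((i : ℕ) + 1) + ((j : ℕ) + 1) := by omega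
  have hrefl : ((i : ℤ) + j - 2 * n).natAbs = 2 * (n + 1) - ((i : ℕ) + 1) - ((j : ℕ) + 1) := by
    omega
  simp only [tauOf, tauKernel, evenCutoff, hsum, hrefl]

lemma tauKernel_comm (x y : ℤ) : tauKernel n t x y = tauKernel n t y x := by
  rw [tauKernel, ← even_evenCutoff (x - y), neg_sub, add_comm x y, tauKernel]

lemma tauKernel_neg_one_left {y : ℤ} (hy : y ≤ n) : tauKernel n t (-1) y = 0 := by
  rw [tauKernel, evenCutoff_of_le (m := -1 + y - 2 * n) (by omega), ← even_evenCutoff (-1 - y),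
    show -(-1 - y) = -1 + y + 2 by ring, sub_self, sub_zero]

lemma tauKernel_natCast_left {y : ℤ} (hy : -1 ≤ y) : tauKernel n t n y = 0 := by
  rw [tauKernel, evenCutoff_of_le (m := n + y + 2) (by omega), ← even_evenCutoff (n - y),
    show -(n - y) = n + y - 2 * (n : ℤ) by ring, sub_zero, sub_self]

lemma tauKernel_wave (x y : ℤ) :
    tauKernel n t (x - 1) y + tauKernel n t (x + 1) y =
      tauKernel n t x (y - 1) + tauKernel n t x (y + 1) := by
  simp only [tauKernel]
  ring_nf

lemma triDiag_mul_tauOf_apply (i j : Fin n) :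
    (triDiag n * tauOf n t) i j =
      2 * tauKernel n t i j - tauKernel n t (i - 1) j - tauKernel n t (i + 1) j := by
  simpa only [mul_apply, mulVec, dotProduct, tauOf_apply] using
    triDiag_mulVec_apply (v := (tauKernel n t · j)) (tauKernel_neg_one_left (by omega))
      (tauKernel_natCast_left (by omega)) i

lemma isHermitian_tauOf : (tauOf n t).IsHermitian :=
  .ext fun i j => by rw [star_trivial, tauOf_apply, tauOf_apply, tauKernel_comm]

lemma commute_triDiag_tauOf : Commute (triDiag n) (tauOf n t) := by
  rw [posSemidef_triDiag.isHermitian.commute_iff isHermitian_tauOf]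
  refine .ext fun i j => ?_
  rw [star_trivial, triDiag_mul_tauOf_apply, triDiag_mul_tauOf_apply]
  linarith [tauKernel_wave (n := n) (t := t) i j, tauKernel_comm (n := n) (t := t) j i,
    tauKernel_comm (n := n) (t := t) (j - 1) i, tauKernel_comm (n := n) (t := t) (j + 1) i]

lemma commute_Qmat_tauOf (γ : ℝ) : Commute (Qmat γ n) (tauOf n t) :=
  (Commute.one_left _).add_left (commute_triDiag_tauOf.smul_left _)

/-- The arguments at which row `i` of `tauOf n t` samples `evenCutoff n t`, one copy of `Fin n` for
each of the three terms. -/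
def tauShift (i : Fin n) : Fin n ⊕ Fin n ⊕ Fin n → ℤ
  | .inl j => i - j
  | .inr (.inl j) => i + j + 2
  | .inr (.inr j) => i + j - 2 * n

lemma tauShift_injective (i : Fin n) : Function.Injective (tauShift i) := by
  rintro (j | j | j) (k | k | k) h <;> simp only [tauShift] at h <;>
    first
    | (exfalso; omega)
    | (obtain rfl : j = k := by omega
       rfl)

lemma sum_abs_evenCutoff (hn : 0 < n) :
    ∑ m ∈ Finset.Icc (-n : ℤ) n, |evenCutoff n t m| =
      |t 0| + 2 * ∑ m ∈ Finset.Ico 1 n, |t m| := by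
  have heven : Function.Even fun m => |evenCutoff n t m| := fun m =>
    congrArg abs (even_evenCutoff m)
  have hlt : ∑ m ∈ Finset.range n, |evenCutoff n t m| = ∑ m ∈ Finset.range n, |t m| :=
    Finset.sum_congr rfl fun m hm => by simp [evenCutoff, Finset.mem_range.mp hm]
  rw [Finset.sum_Icc_of_even_eq_range heven, Finset.sum_range_succ, hlt,
    evenCutoff_of_le (m := n) (by simp), Finset.sum_range_eq_add_Ico _ hn]
  simp only [abs_zero, add_zero, smul_add, nsmul_eq_mul, Nat.cast_ofNat, evenCutoff,
    Int.natAbs_zero, hn, ↓reduceIte]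
  ring

lemma sum_abs_tauOf_le (i : Fin n) :
    ∑ j, |tauOf n t i j| ≤ |t 0| + 2 * ∑ m ∈ Finset.Ico 1 n, |t m| :=
  calc ∑ j, |tauOf n t i j|
    _ ≤ ∑ j : Fin n, (|evenCutoff n t (i - j)| + (|evenCutoff n t (i + j + 2)| +
          |evenCutoff n t (i + j - 2 * n)|)) := by
        gcongr with j
        rw [tauOf_apply, tauKernel, ← add_assoc]
        exact (abs_sub _ _).trans (by gcongr; exact abs_sub _ _)
    _ = ∑ x, |evenCutoff n t (tauShift i x)| := by
        simp only [Fintype.sum_sum_type, Finset.sum_add_distrib, tauShift]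
    _ ≤ ∑ m ∈ Finset.Icc (-n : ℤ) n, |evenCutoff n t m| :=
        sum_comp_le_sum_of_injective (tauShift_injective i) (fun _ => abs_nonneg _)
          fun m hm => abs_eq_zero.mpr
            (evenCutoff_of_le (by rw [Finset.mem_Icc] at hm; omega))
    _ = |t 0| + 2 * ∑ m ∈ Finset.Ico 1 n, |t m| := sum_abs_evenCutoff i.pos

lemma tauOf_eq_smul_one_add_tauOf_update :
    tauOf n t = t 0 • 1 + tauOf n (Function.update t 0 0) := by
  ext i j
  have hsum : ((i : ℕ) + 1) + ((j : ℕ) + 1) ≠ 0 := by omega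
  have hrefl : 2 * (n + 1) - ((i : ℕ) + 1) - ((j : ℕ) + 1) ≠ 0 := by omega
  simp only [tauOf, Matrix.add_apply, Matrix.smul_apply, smul_eq_mul,
    Function.update_of_ne hsum, Function.update_of_ne hrefl]
  obtain rfl | hij := eq_or_ne i j
  · simp only [sub_self, Int.natAbs_zero, i.pos, ↓reduceIte, one_apply_eq, mul_one,
      Function.update_self, zero_sub]
    ring
  · have hdiff : ((i : ℤ) - j).natAbs ≠ 0 := by omega
    rw [Function.update_of_ne hdiff, one_apply_ne hij, mul_zero, zero_add]

lemma posDef_tauOf (ht : 2 * ∑ m ∈ Finset.Ico 1 n, |t m| < t 0) : (tauOf n t).PosDef := by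
  have hupdate : ∑ m ∈ Finset.Ico 1 n, |Function.update t 0 0 m| = ∑ m ∈ Finset.Ico 1 n, |t m| :=
    Finset.sum_congr rfl fun m hm => by
      rw [Function.update_of_ne (Nat.one_le_iff_ne_zero.mp (Finset.mem_Ico.mp hm).1)]
  rw [tauOf_eq_smul_one_add_tauOf_update]
  refine posDef_smul_one_add_of_sum_norm_lt isHermitian_tauOf fun i =>
    (sum_abs_tauOf_le i).trans_lt ?_
  rwa [hupdate, Function.update_self, abs_zero, zero_add]

end Tau

section Preconditioner

lemma posDef_Pmat {γ : ℝ} (hγ : γ ∈ Set.Ioo (0 : ℝ) 2) (n : ℕ) : (Pmat γ n).PosDef :=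
  posDef_mul_of_commute (posDef_Qmat hγ.1.le) (posDef_tauOf (two_mul_sum_abs_gCoef_lt hγ n))
    (commute_Qmat_tauOf γ)

theorem stmt_11_general {α β : ℝ} (hα : α ∈ Set.Ioo (0 : ℝ) 2) (hβ : β ∈ Set.Ioo (0 : ℝ) 2)
    (Nx Ny : ℕ) {ηα ηβ : ℝ} (hηα : 0 ≤ ηα) (hηβ : 0 ≤ ηβ) :
    ∀ Pτ : Matrix (Fin Ny × Fin Nx) (Fin Ny × Fin Nx) ℝ,
      Pτ = 1 + ηα • ((1 : Matrix (Fin Ny) (Fin Ny) ℝ) ⊗ₖ Pmat α Nx) +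
             ηβ • (Pmat β Ny ⊗ₖ (1 : Matrix (Fin Nx) (Fin Nx) ℝ)) →
      (Pmat α Nx).IsSymm ∧ (Pmat α Nx).PosDef ∧
      (Pmat β Ny).IsSymm ∧ (Pmat β Ny).PosDef ∧
      Pτ.IsSymm ∧ Pτ.PosDef ∧ IsUnit Pτ := by
  rintro Pτ rfl
  have hPα := posDef_Pmat hα Nx
  have hPβ := posDef_Pmat hβ Ny
  have hPτ := posDef_one_add_kronecker_sum hPα.posSemidef hPβ.posSemidef hηα hηβ
  exact ⟨isHermitian_iff_isSymm.mp hPα.isHermitian, hPα,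
    isHermitian_iff_isSymm.mp hPβ.isHermitian, hPβ,
    isHermitian_iff_isSymm.mp hPτ.isHermitian, hPτ, hPτ.isUnit⟩

end Preconditioner

theorem stmt_11 (α β : ℝ) (hα : α ∈ Set.Ioo (1 : ℝ) 2) (hβ : β ∈ Set.Ioo (1 : ℝ) 2)
    (Nx Ny : ℕ) (hNx : 1 ≤ Nx) (hNy : 1 ≤ Ny)
    (ηα ηβ : ℝ) (hηα : 0 < ηα) (hηβ : 0 < ηβ) :
    ∀ Pτ : Matrix (Fin Ny × Fin Nx) (Fin Ny × Fin Nx) ℝ,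
      Pτ = 1 + ηα • ((1 : Matrix (Fin Ny) (Fin Ny) ℝ) ⊗ₖ Pmat α Nx) +
             ηβ • (Pmat β Ny ⊗ₖ (1 : Matrix (Fin Nx) (Fin Nx) ℝ)) →
      (Pmat α Nx).IsSymm ∧ (Pmat α Nx).PosDef ∧
      (Pmat β Ny).IsSymm ∧ (Pmat β Ny).PosDef ∧
      Pτ.IsSymm ∧ Pτ.PosDef ∧ IsUnit Pτ := by
  exact stmt_11_general (Set.Ioo_subset_Ioo_left zero_le_one hα)
    (Set.Ioo_subset_Ioo_left zero_le_one hβ) Nx Ny hηα.le hηβ.le
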